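/- The set ℒ = {f ∈ V : for every q > 0, sup_{0<r<1} (1/(2π)) ∫_{−π}^{π} |Im f(r e^{iθ})|^q dθ = ∞} — i.e., the set of u ∈ ⋂_{p<1} h^p whose normalized harmonic conjugate ũ belongs to no h^q with q > 0 — is a G_δ and dense subset of the metric space (V, d). -/

import Mathlib

open Complex Set Metric

noncomputable section

/-- `N_p`-mean of a real function on the circle of radius `r`:
`(1/2π) ∫_{-π}^{π} |u(r e^{iθ})|^p dθ`. -/
def circMeanR (p : ℝ) (u : ℂ → ℝ) (r : ℝ) : ℝ :=
  (1 / (2 * Real.pi)) * ∫ θ in (-Real.pi)..Real.pi,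
    |u ((r : ℂ) * Complex.exp ((θ : ℂ) * Complex.I))| ^ p

/-- The space `⋂_{p<1} h^p`, identified with the holomorphic functions `f = u + i ũ`
with `Im f(0) = 0` and `Re f ∈ h^p` for all `0 < p < 1`. -/
def HarmV : Type :=
  {f : ℂ → ℂ // DifferentiableOn ℂ f (Metric.ball (0 : ℂ) 1) ∧ (f 0).im = 0 ∧
    ∀ p ∈ Set.Ioo (0 : ℝ) 1, ∃ C : ℝ, ∀ r ∈ Set.Ioo (0 : ℝ) 1,
      circMeanR p (fun z => (f z).re) r ≤ C}

/-- `δ_p(f,g) = sup_{0<r<1} (1/2π) ∫_{-π}^{π} |Re(f-g)(r e^{iθ})|^p dθ`. -/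
def deltaP (p : ℝ) (f g : ℂ → ℂ) : ℝ :=
  ⨆ r : Set.Ioo (0 : ℝ) 1, circMeanR p (fun z => (f z - g z).re) r

/-- The metric `d(f,g) = Σ_{n≥1} 2^{-n} δ_{p_n}(f,g)/(1+δ_{p_n}(f,g))`, `p_n = n/(n+1)`
(indices shifted so `n : ℕ` starts at `0`). -/
def harmDist (f g : HarmV) : ℝ :=
  ∑' n : ℕ, (1 / 2 : ℝ) ^ (n + 1) *
    (deltaP (((n : ℝ) + 1) / ((n : ℝ) + 2)) f.1 g.1 /
      (1 + deltaP (((n : ℝ) + 1) / ((n : ℝ) + 2)) f.1 g.1))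

/-- The topology induced by a distance function via its open balls. -/
def ballTopology {α : Type*} (d : α → α → ℝ) : TopologicalSpace α :=
  TopologicalSpace.generateFrom {U | ∃ x ε, 0 < ε ∧ U = {y | d x y < ε}}


/-- The point `r e^{iθ}`. -/
def cpt (r θ : ℝ) : ℂ := (r : ℂ) * Complex.exp ((θ : ℂ) * Complex.I)

lemma cm_def (p : ℝ) (u : ℂ → ℝ) (r : ℝ) : circMeanR p u r =
    (1 / (2 * Real.pi)) * ∫ θ in (-Real.pi)..Real.pi, |u (cpt r θ)| ^ p := rfl

lemma norm_cpt {r : ℝ} (hr : 0 ≤ r) (θ : ℝ) : ‖cpt r θ‖ = r := by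
  simp [cpt, Complex.norm_exp_ofReal_mul_I, abs_of_nonneg hr]

lemma continuous_cpt (r : ℝ) : Continuous (cpt r) := by
  unfold cpt; fun_prop

lemma cpt_mem {r : ℝ} (hr : r ∈ Set.Ioo (0 : ℝ) 1) (θ : ℝ) : cpt r θ ∈ Metric.ball (0 : ℂ) 1 := by
  rw [mem_ball_zero_iff, norm_cpt hr.1.le]; exact hr.2

lemma cpt_pow (r θ : ℝ) (m : ℕ) : cpt r θ ^ m = cpt (r ^ m) (m * θ) := by
  simp only [cpt, mul_pow, ← Complex.exp_nat_mul]
  push_cast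
  ring_nf

lemma cont_on_circle {E : Type*} [TopologicalSpace E] {f : ℂ → E}
    (hf : ContinuousOn f (Metric.ball (0 : ℂ) 1))
    {r : ℝ} (hr : r ∈ Set.Ioo (0 : ℝ) 1) : Continuous fun θ : ℝ => f (cpt r θ) :=
  hf.comp_continuous (continuous_cpt r) (cpt_mem hr)

/-- continuity of `u` on the circle of radius `r` -/
def CC (u : ℂ → ℝ) (r : ℝ) : Prop := Continuous fun θ : ℝ => u (cpt r θ)

lemma CC.cont_rpow {u : ℂ → ℝ} {r p : ℝ} (hu : CC u r) (hp : 0 ≤ p) :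
    Continuous fun θ : ℝ => |u (cpt r θ)| ^ p := by
  have h : Continuous fun θ : ℝ => u (cpt r θ) := hu
  exact h.abs.rpow_const (fun _ => Or.inr hp)

lemma CC.ii {u : ℂ → ℝ} {r p : ℝ} (hu : CC u r) (hp : 0 ≤ p) (a b : ℝ) :
    IntervalIntegrable (fun θ : ℝ => |u (cpt r θ)| ^ p) MeasureTheory.volume a b :=
  (hu.cont_rpow hp).intervalIntegrable a b

lemma cm_nonneg (p : ℝ) (u : ℂ → ℝ) (r : ℝ) : 0 ≤ circMeanR p u r := by
  rw [cm_def]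
  have : 0 ≤ ∫ θ in (-Real.pi)..Real.pi, |u (cpt r θ)| ^ p :=
    intervalIntegral.integral_nonneg (by linarith [Real.pi_pos])
      (fun θ _ => Real.rpow_nonneg (abs_nonneg _) _)
  positivity

/-- general comparison -/
lemma cm_le_of_pointwise {p q : ℝ} {u w : ℂ → ℝ} {r A B : ℝ} (hp : 0 ≤ p) (hq : 0 ≤ q)
    (hu : CC u r) (hw : CC w r)
    (h : ∀ θ, |w (cpt r θ)| ^ q ≤ A + B * |u (cpt r θ)| ^ p) :
    circMeanR q w r ≤ A + B * circMeanR p u r := by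
  rw [cm_def, cm_def]
  have h1 : ∫ θ in (-Real.pi)..Real.pi, |w (cpt r θ)| ^ q ≤
      ∫ θ in (-Real.pi)..Real.pi, (A + B * |u (cpt r θ)| ^ p) := by
    apply intervalIntegral.integral_mono_on (by linarith [Real.pi_pos]) (hw.ii hq _ _)
    · exact (continuous_const.add (continuous_const.mul (hu.cont_rpow hp))).intervalIntegrable _ _
    · intro θ _; exact h θ
  rw [intervalIntegral.integral_add (by simp) ((hu.ii hp _ _).const_mul B),
    intervalIntegral.integral_const_mul, intervalIntegral.integral_const, smul_eq_mul] at h1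
  have hpi := Real.pi_pos
  calc _ ≤ 1 / (2 * Real.pi) * ((Real.pi - -Real.pi) * A +
        B * ∫ θ in (-Real.pi)..Real.pi, |u (cpt r θ)| ^ p) := by gcongr
    _ = _ := by field_simp; ring

lemma CC.zero (r : ℝ) : CC (fun _ => 0) r := continuous_const

lemma cm_le_const {q : ℝ} {w : ℂ → ℝ} {r B : ℝ} (hq : 0 ≤ q)
    (hw : CC w r) (h : ∀ θ, |w (cpt r θ)| ≤ B) :
    circMeanR q w r ≤ B ^ q := by
  have := cm_le_of_pointwise (p := 0) (A := B ^ q) (B := 0) le_rfl hq (CC.zero r) hw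
    (fun θ => by
      simpa using Real.rpow_le_rpow (abs_nonneg _) (h θ) hq)
  simpa using this

lemma cm_mono {q : ℝ} {u w : ℂ → ℝ} {r : ℝ} (hq : 0 ≤ q) (hu : CC u r)
    (hw : CC w r) (h : ∀ θ, |w (cpt r θ)| ≤ |u (cpt r θ)|) :
    circMeanR q w r ≤ circMeanR q u r := by
  have := cm_le_of_pointwise (A := 0) (B := 1) hq hq hu hw
    (fun θ => by
      simpa using Real.rpow_le_rpow (abs_nonneg _) (h θ) hq)
  simpa using this

lemma cm_exp {p q : ℝ} {u : ℂ → ℝ} {r : ℝ} (hq : 0 < q) (hqp : q ≤ p) (hu : CC u r) :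
    circMeanR q u r ≤ 1 + circMeanR p u r := by
  have := cm_le_of_pointwise (p := p) (A := 1) (B := 1) (hq.le.trans hqp) hq.le hu hu
    (fun θ => by
      rcases le_total |u (cpt r θ)| 1 with h | h
      · have h1 := Real.rpow_le_one (abs_nonneg _) h hq.le
        have h2 : 0 ≤ |u (cpt r θ)| ^ p := Real.rpow_nonneg (abs_nonneg _) _
        linarith
      · have h1 := Real.rpow_le_rpow_of_exponent_le h hqp
        linarith)
  simpa using this

lemma cm_smul {p t : ℝ} {u : ℂ → ℝ} {r : ℝ} :
    circMeanR p (fun z => t * u z) r = |t| ^ p * circMeanR p u r := by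
  rw [cm_def, cm_def]
  simp only [abs_mul, Real.mul_rpow (abs_nonneg _) (abs_nonneg _)]
  rw [intervalIntegral.integral_const_mul]; ring

lemma cm_le_add {p : ℝ} {u v w : ℂ → ℝ} {r : ℝ} (hp : 0 ≤ p) (hp1 : p ≤ 1)
    (hu : CC u r) (hv : CC v r) (hw : CC w r)
    (h : ∀ θ, |w (cpt r θ)| ≤ |u (cpt r θ)| + |v (cpt r θ)|) :
    circMeanR p w r ≤ circMeanR p u r + circMeanR p v r := by
  rw [cm_def, cm_def, cm_def, ← mul_add, ← intervalIntegral.integral_add (hu.ii hp _ _) (hv.ii hp _ _)]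
  have hpi := Real.pi_pos
  apply mul_le_mul_of_nonneg_left _ (by positivity)
  apply intervalIntegral.integral_mono_on (by linarith [Real.pi_pos]) (hw.ii hp _ _)
    ((hu.ii hp _ _).add (hv.ii hp _ _))
  intro θ _
  exact (Real.rpow_le_rpow (abs_nonneg _) (h θ) hp).trans
    (Real.rpow_add_le_add_rpow (abs_nonneg _) (abs_nonneg _) hp hp1)

lemma cm_one_le {u : ℂ → ℝ} {r B : ℝ} (hu : CC u r) (hB : ∀ θ, |u (cpt r θ)| ≤ B) :
    circMeanR 1 u r ≤ B ^ (1 / 2 : ℝ) * circMeanR (1 / 2) u r := by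
  have := cm_le_of_pointwise (p := 1 / 2) (q := 1) (A := 0) (B := B ^ (1 / 2 : ℝ))
    (by norm_num) (by norm_num) hu hu
    (fun θ => by
      have h1 := Real.rpow_le_rpow (abs_nonneg _) (hB θ) (by norm_num : (0 : ℝ) ≤ 1 / 2)
      have h2 : 0 ≤ |u (cpt r θ)| ^ (1 / 2 : ℝ) := Real.rpow_nonneg (abs_nonneg _) _
      have h3 : |u (cpt r θ)| ^ (1 : ℝ) = |u (cpt r θ)| ^ (1 / 2 : ℝ) * |u (cpt r θ)| ^ (1 / 2 : ℝ) := by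
        rw [← Real.rpow_add_of_nonneg (abs_nonneg _) (by norm_num) (by norm_num)]; norm_num
      rw [h3, zero_add]
      exact mul_le_mul_of_nonneg_right h1 h2)
  simpa using this

/-- circle average versus our mean -/
lemma cm_eq_circleAverage (p : ℝ) (u : ℂ → ℝ) (r : ℝ) :
    circMeanR p u r = Real.circleAverage (fun z => |u z| ^ p) 0 r := by
  rw [Real.circleAverage_eq_integral_add (-Real.pi), cm_def, smul_eq_mul]
  have := intervalIntegral.integral_comp_add_right (a := 0) (b := 2 * Real.pi)
    (fun θ => |u (circleMap 0 r θ)| ^ p) (-Real.pi)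
  rw [this]
  simp only [circleMap_zero, one_div, cpt]
  congr 3 <;> ring
lemma schwarz_formula {f : ℂ → ℂ} (hf : DifferentiableOn ℂ f (Metric.ball (0 : ℂ) 1))
    (h0 : (f 0).im = 0) {s : ℝ} (hs : s ∈ Set.Ioo (0 : ℝ) 1) {z : ℂ} (hz : ‖z‖ < s) :
    Real.circleAverage (fun ζ => ((ζ + z) / (ζ - z)) * ((f ζ).re : ℂ)) 0 s = f z := by
  have habs : |s| = s := abs_of_pos hs.1
  have hsub : Metric.closedBall (0 : ℂ) s ⊆ Metric.ball 0 1 := Metric.closedBall_subset_ball hs.2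
  have hcl : closure (Metric.ball (0 : ℂ) s) = Metric.closedBall 0 s := closure_ball _ hs.1.ne'
  have hdc : DiffContOnCl ℂ f (Metric.ball 0 |s|) := by
    rw [habs]
    refine ⟨hf.mono (Metric.ball_subset_closedBall.trans hsub), ?_⟩
    rw [hcl]; exact hf.continuousOn.mono hsub
  have hconj0 : (starRingEnd ℂ) (f 0) = f 0 := Complex.conj_eq_iff_im.2 h0
  have hsph : Metric.sphere (0 : ℂ) |s| ⊆ Metric.closedBall 0 s := by
    rw [habs]; exact Metric.sphere_subset_closedBall
  have hfc : ContinuousOn f (Metric.sphere (0 : ℂ) |s|) := (hf.continuousOn.mono hsub).mono hsph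
  have hne : ∀ ζ ∈ Metric.sphere (0 : ℂ) |s|, ζ - z ≠ 0 := by
    intro ζ hζ h
    rw [habs, mem_sphere_zero_iff_norm] at hζ
    rw [sub_eq_zero.1 h] at hζ
    exact absurd hζ hz.ne
  have hkc : ContinuousOn (fun ζ : ℂ => ζ / (ζ - z)) (Metric.sphere (0 : ℂ) |s|) :=
    continuousOn_id.div (by fun_prop) hne
  have hcc : ContinuousOn (fun ζ : ℂ => (starRingEnd ℂ) (f ζ)) (Metric.sphere (0 : ℂ) |s|) :=
    Complex.continuous_conj.comp_continuousOn hfc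
  have i1 : CircleIntegrable (fun ζ => ζ / (ζ - z) * f ζ) 0 s := (hkc.mul hfc).circleIntegrable'
  have i2 : CircleIntegrable (fun ζ => ζ / (ζ - z) * (starRingEnd ℂ) (f ζ)) 0 s :=
    (hkc.mul hcc).circleIntegrable'
  have i3 : CircleIntegrable (fun ζ => (1 / 2 : ℂ) * f ζ) 0 s :=
    (continuousOn_const.mul hfc).circleIntegrable'
  have i4 : CircleIntegrable (fun ζ => (1 / 2 : ℂ) * (starRingEnd ℂ) (f ζ)) 0 s :=
    (continuousOn_const.mul hcc).circleIntegrable'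
  have i5 : CircleIntegrable f 0 s := hfc.circleIntegrable'
  have e1 : Real.circleAverage (fun ζ => ζ / (ζ - z) * f ζ) 0 s = f z := by
    have := hdc.circleAverage_smul_div (w := z) (by rw [habs]; simpa using hz)
    simpa using this
  have e5 : Real.circleAverage f 0 s = f 0 := hdc.circleAverage
  have e3 : Real.circleAverage (fun ζ => (1 / 2 : ℂ) * f ζ) 0 s = (1 / 2 : ℂ) * f 0 := by
    rw [← e5]; exact Real.circleAverage_fun_smul (a := (1 / 2 : ℂ)) (f := f)
  have e6 : Real.circleAverage (fun ζ => (starRingEnd ℂ) (f ζ)) 0 s = f 0 := by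
    have := Complex.conjCLE.toContinuousLinearMap.circleAverage_comp_comm i5
    rw [e5] at this
    calc _ = _ := this
      _ = _ := hconj0
  have e4 : Real.circleAverage (fun ζ => (1 / 2 : ℂ) * (starRingEnd ℂ) (f ζ)) 0 s
      = (1 / 2 : ℂ) * f 0 := by
    conv_rhs => rw [← e6]
    exact Real.circleAverage_fun_smul (a := (1 / 2 : ℂ)) (f := fun ζ => (starRingEnd ℂ) (f ζ))
  have hne2 : ∀ ζ ∈ Metric.closedBall (0 : ℂ) s, (s : ℂ) ^ 2 - (starRingEnd ℂ) z * ζ ≠ 0 := by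
    intro ζ hζ h
    rw [mem_closedBall_zero_iff] at hζ
    have h1 : (s : ℂ) ^ 2 = (starRingEnd ℂ) z * ζ := sub_eq_zero.1 h
    have h2 := congrArg norm h1
    simp only [norm_pow, norm_mul, RCLike.norm_conj, Complex.norm_real, Real.norm_eq_abs, habs] at h2
    have : ‖z‖ * ‖ζ‖ ≤ ‖z‖ * s := by gcongr
    nlinarith [hs.1]
  have e2 : Real.circleAverage (fun ζ => ζ / (ζ - z) * (starRingEnd ℂ) (f ζ)) 0 s = f 0 := by
    set g : ℂ → ℂ := fun ζ => (s : ℂ) ^ 2 / ((s : ℂ) ^ 2 - (starRingEnd ℂ) z * ζ) * f ζ with hg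
    have hgd : DifferentiableOn ℂ g (Metric.ball 0 s) := by
      apply DifferentiableOn.mul _ (hf.mono (Metric.ball_subset_closedBall.trans hsub))
      apply DifferentiableOn.div (by fun_prop) (by fun_prop)
      intro ζ hζ; exact hne2 ζ (Metric.ball_subset_closedBall hζ)
    have hgc : ContinuousOn g (Metric.closedBall 0 s) := by
      apply ContinuousOn.mul _ (hf.continuousOn.mono hsub)
      apply ContinuousOn.div (by fun_prop) (by fun_prop)
      exact hne2
    have hgcl : DiffContOnCl ℂ g (Metric.ball 0 |s|) := by
      rw [habs]; exact ⟨hgd, by rwa [hcl]⟩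
    have e := hgcl.circleAverage
    have hg0 : g 0 = f 0 := by
      have : (s : ℂ) ≠ 0 := by exact_mod_cast hs.1.ne'
      simp [hg, this]
    have ig : CircleIntegrable g 0 s := (hgc.mono hsph).circleIntegrable'
    have := Complex.conjCLE.toContinuousLinearMap.circleAverage_comp_comm ig
    rw [e, hg0] at this
    calc _ = Real.circleAverage (Complex.conjCLE.toContinuousLinearMap ∘ g) 0 s := by
          apply Real.circleAverage_congr_sphere
          intro ζ hζ
          have hn := hne ζ hζ
          have hn2 := hne2 ζ (hsph hζ)
          rw [habs, mem_sphere_zero_iff_norm] at hζ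
          have hzz : (s : ℂ) ^ 2 = ζ * (starRingEnd ℂ) ζ := by
            rw [Complex.mul_conj, Complex.normSq_eq_norm_sq, hζ]; push_cast; ring
          have hzc : (starRingEnd ℂ) ζ ≠ 0 := by
            rw [map_ne_zero_iff _ (starRingEnd ℂ).injective]
            intro h; rw [h, norm_zero] at hζ; exact hs.1.ne hζ
          simp only [hg, Function.comp_apply]
          show _ = (starRingEnd ℂ) _
          simp only [map_mul, map_div₀, map_sub, map_pow, Complex.conj_ofReal, Complex.conj_conj]
          congr 1
          rw [hzz]
          rw [show ζ * (starRingEnd ℂ) ζ - z * (starRingEnd ℂ) ζ = (ζ - z) * (starRingEnd ℂ) ζ by ring]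
          field_simp
      _ = _ := this
      _ = _ := hconj0
  have key : Set.EqOn (fun ζ => ((ζ + z) / (ζ - z)) * ((f ζ).re : ℂ))
      (fun ζ => ((ζ / (ζ - z) * f ζ + ζ / (ζ - z) * (starRingEnd ℂ) (f ζ))
        - ((1 / 2 : ℂ) * f ζ + (1 / 2 : ℂ) * (starRingEnd ℂ) (f ζ)))) (Metric.sphere 0 |s|) := by
    intro ζ hζ
    have hn := hne ζ hζ
    simp only
    rw [Complex.re_eq_add_conj]
    field_simp
    ring
  rw [Real.circleAverage_congr_sphere key]
  refine (Real.circleAverage_fun_sub (i1.add i2) (i3.add i4)).trans ?_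
  rw [Real.circleAverage_add i1 i2, Real.circleAverage_add i3 i4, e1, e2, e3, e4]
  ring

lemma schwarz_bound {f : ℂ → ℂ} (hf : DifferentiableOn ℂ f (Metric.ball (0 : ℂ) 1))
    (h0 : (f 0).im = 0) {s : ℝ} (hs : s ∈ Set.Ioo (0 : ℝ) 1) {z : ℂ} (hz : ‖z‖ < s) :
    ‖f z‖ ≤ 2 / (s - ‖z‖) * circMeanR 1 (fun z => (f z).re) s := by
  have habs : |s| = s := abs_of_pos hs.1
  have hsub : Metric.closedBall (0 : ℂ) s ⊆ Metric.ball 0 1 := Metric.closedBall_subset_ball hs.2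
  have hc : CC (fun z => (f z).re) s :=
    cont_on_circle (Complex.continuous_re.comp_continuousOn hf.continuousOn) hs
  rw [← schwarz_formula hf h0 hs hz, cm_eq_circleAverage]
  rw [Real.circleAverage, Real.circleAverage, norm_smul, smul_eq_mul, Real.norm_eq_abs,
    abs_of_pos (inv_pos.2 Real.two_pi_pos)]
  rw [mul_left_comm, ← intervalIntegral.integral_const_mul]
  apply mul_le_mul_of_nonneg_left _ (inv_pos.2 Real.two_pi_pos).le
  apply intervalIntegral.norm_integral_le_of_norm_le Real.two_pi_pos.le
  · refine Filter.Eventually.of_forall fun θ _ => ?_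
    have hn : ‖circleMap 0 s θ‖ = s := by simp [habs]
    rw [norm_mul, Complex.norm_real, Real.rpow_one, norm_div]
    rw [Real.norm_eq_abs]
    apply mul_le_mul_of_nonneg_right _ (abs_nonneg _)
    have h1 : ‖circleMap 0 s θ + z‖ ≤ 2 := by
      have := norm_add_le (circleMap 0 s θ) z
      linarith [hs.2]
    have h2 : s - ‖z‖ ≤ ‖circleMap 0 s θ - z‖ := by
      have := norm_sub_norm_le (circleMap 0 s θ) z
      linarith
    have : 0 < s - ‖z‖ := by linarith
    gcongr
  · apply Continuous.intervalIntegrable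
    have : Continuous fun θ : ℝ => |(f (cpt s θ)).re| ^ (1 : ℝ) := hc.cont_rpow zero_le_one
    simp only [cpt] at this
    simp only [circleMap_zero]
    exact continuous_const.mul this

/-- Hardy-Littlewood type estimate with exponent one half. -/
lemma hl_bound {f : ℂ → ℂ} (hf : DifferentiableOn ℂ f (Metric.ball (0 : ℂ) 1))
    (h0 : (f 0).im = 0) {δ : ℝ}
    (hδ : ∀ r ∈ Set.Ioo (0 : ℝ) 1, circMeanR (1 / 2) (fun z => (f z).re) r ≤ δ)
    {R : ℝ} (hR : R ∈ Set.Ioo (0 : ℝ) 1) {z : ℂ} (hz : ‖z‖ ≤ R) :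
    (R - ‖z‖) ^ 2 * ‖f z‖ ≤ 64 * δ ^ 2 := by
  have hsub : Metric.closedBall (0 : ℂ) R ⊆ Metric.ball 0 1 := Metric.closedBall_subset_ball hR.2
  have hδ0 : 0 ≤ δ := (cm_nonneg _ _ _).trans (hδ R hR)
  have hcont : ContinuousOn (fun z : ℂ => (R - ‖z‖) ^ 2 * ‖f z‖) (Metric.closedBall 0 R) := by
    apply ContinuousOn.mul (by fun_prop)
    exact (hf.continuousOn.mono hsub).norm
  obtain ⟨z0, hz0, hmax⟩ := (isCompact_closedBall (0 : ℂ) R).exists_isMaxOn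
    ⟨z, by simpa using hz⟩ hcont
  set W := (R - ‖z0‖) ^ 2 * ‖f z0‖ with hW
  have hWz : ∀ w : ℂ, ‖w‖ ≤ R → (R - ‖w‖) ^ 2 * ‖f w‖ ≤ W := fun w hw =>
    hmax (by simpa using hw)
  refine (hWz z hz).trans ?_
  rw [mem_closedBall_zero_iff] at hz0
  have hW0 : 0 ≤ W := by positivity
  rcases hz0.eq_or_lt with h | h
  · have : W = 0 := by rw [hW, h]; simp
    rw [this]; positivity
  set D := R - ‖z0‖ with hD
  have hDpos : 0 < D := by linarith
  set s := (R + ‖z0‖) / 2 with hs'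
  have hn0 := norm_nonneg z0
  have hs : s ∈ Set.Ioo (0 : ℝ) 1 := ⟨by have := hR.1; positivity, by linarith [hR.2]⟩
  have hb := schwarz_bound hf h0 hs (z := z0) (by linarith)
  have hc : CC (fun z => (f z).re) s :=
    cont_on_circle (Complex.continuous_re.comp_continuousOn hf.continuousOn) hs
  have hRs : R - s = D / 2 := by rw [hs', hD]; ring
  have hsz : s - ‖z0‖ = D / 2 := by rw [hs', hD]; ring
  have h1 := cm_one_le (B := W / (D / 2) ^ 2) hc (fun θ => by
    have h2 := hWz (cpt s θ) (by rw [norm_cpt hs.1.le]; linarith)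
    rw [norm_cpt hs.1.le, hRs] at h2
    refine (Complex.abs_re_le_norm _).trans ?_
    rw [le_div_iff₀ (by positivity)]; linarith)
  have h3 : (W / (D / 2) ^ 2) ^ (1 / 2 : ℝ) = Real.sqrt W / (D / 2) := by
    rw [← Real.sqrt_eq_rpow, Real.sqrt_div hW0, Real.sqrt_sq (by positivity)]
  rw [h3] at h1
  rw [hsz] at hb
  have h4 : circMeanR 1 (fun z => (f z).re) s ≤ Real.sqrt W / (D / 2) * δ :=
    h1.trans (mul_le_mul_of_nonneg_left (hδ s hs) (by positivity))
  have h5 : W ≤ 8 * δ * Real.sqrt W := by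
    calc W = D ^ 2 * ‖f z0‖ := hW
      _ ≤ D ^ 2 * (2 / (D / 2) * (Real.sqrt W / (D / 2) * δ)) := by gcongr; exact hb.trans (by gcongr)
      _ = 8 * δ * Real.sqrt W := by field_simp; ring
  have h6 := Real.sq_sqrt hW0
  have h7 := Real.sqrt_nonneg W
  rcases h7.eq_or_lt with h8 | h8
  · rw [← h6, ← h8]; nlinarith [sq_nonneg δ]
  · have : Real.sqrt W ≤ 8 * δ := by
      by_contra hcon
      push Not at hcon
      nlinarith
    nlinarith
lemma HarmV.cc_re (f : HarmV) {r : ℝ} (hr : r ∈ Set.Ioo (0 : ℝ) 1) : CC (fun z => (f.1 z).re) r :=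
  cont_on_circle (Complex.continuous_re.comp_continuousOn f.2.1.continuousOn) hr

lemma HarmV.cc_im (f : HarmV) {r : ℝ} (hr : r ∈ Set.Ioo (0 : ℝ) 1) : CC (fun z => (f.1 z).im) r :=
  cont_on_circle (Complex.continuous_im.comp_continuousOn f.2.1.continuousOn) hr

lemma HarmV.cc_re_sub (f g : HarmV) {r : ℝ} (hr : r ∈ Set.Ioo (0 : ℝ) 1) :
    CC (fun z => (f.1 z - g.1 z).re) r :=
  cont_on_circle (Complex.continuous_re.comp_continuousOn
    (f.2.1.continuousOn.sub g.2.1.continuousOn)) hr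

lemma HarmV.cc_im_sub (f g : HarmV) {r : ℝ} (hr : r ∈ Set.Ioo (0 : ℝ) 1) :
    CC (fun z => (f.1 z - g.1 z).im) r :=
  cont_on_circle (Complex.continuous_im.comp_continuousOn
    (f.2.1.continuousOn.sub g.2.1.continuousOn)) hr

instance : Nonempty (Set.Ioo (0 : ℝ) 1) := ⟨⟨1 / 2, by norm_num⟩⟩

lemma deltaP_bdd {p : ℝ} (hp : p ∈ Set.Ioo (0 : ℝ) 1) (f g : HarmV) :
    BddAbove (Set.range fun r : Set.Ioo (0 : ℝ) 1 => circMeanR p (fun z => (f.1 z - g.1 z).re) r) := by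
  obtain ⟨C, hC⟩ := f.2.2.2 p hp
  obtain ⟨C', hC'⟩ := g.2.2.2 p hp
  refine ⟨C + C', ?_⟩
  rintro _ ⟨r, rfl⟩
  refine (cm_le_add hp.1.le hp.2.le (f.cc_re r.2) (g.cc_re r.2) (f.cc_re_sub g r.2) ?_).trans
    (add_le_add (hC r r.2) (hC' r r.2))
  intro θ
  simp only [Complex.sub_re]
  exact abs_sub _ _

lemma le_deltaP {p : ℝ} (hp : p ∈ Set.Ioo (0 : ℝ) 1) (f g : HarmV) {r : ℝ}
    (hr : r ∈ Set.Ioo (0 : ℝ) 1) :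
    circMeanR p (fun z => (f.1 z - g.1 z).re) r ≤ deltaP p f.1 g.1 :=
  le_ciSup (deltaP_bdd hp f g) ⟨r, hr⟩

lemma deltaP_nonneg (p : ℝ) (f g : ℂ → ℂ) : 0 ≤ deltaP p f g :=
  Real.iSup_nonneg fun _ => cm_nonneg _ _ _

lemma deltaP_tri {p : ℝ} (hp : p ∈ Set.Ioo (0 : ℝ) 1) (f k g : HarmV) :
    deltaP p f.1 g.1 ≤ deltaP p f.1 k.1 + deltaP p k.1 g.1 := by
  apply ciSup_le
  intro r
  refine (cm_le_add hp.1.le hp.2.le (f.cc_re_sub k r.2) (k.cc_re_sub g r.2) (f.cc_re_sub g r.2)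
    ?_).trans (add_le_add (le_deltaP hp f k r.2) (le_deltaP hp k g r.2))
  intro θ
  simp only [Complex.sub_re]
  exact abs_sub_le _ _ _

lemma deltaP_self {p : ℝ} (hp : 0 < p) (f : ℂ → ℂ) : deltaP p f f = 0 := by
  simp [deltaP, circMeanR, Real.zero_rpow hp.ne']

lemma pn_mem (n : ℕ) : (((n : ℝ) + 1) / ((n : ℝ) + 2)) ∈ Set.Ioo (0 : ℝ) 1 := by
  refine ⟨by positivity, ?_⟩
  rw [div_lt_one (by positivity)]; linarith

lemma phi_mono {x y : ℝ} (hx : 0 ≤ x) (h : x ≤ y) : x / (1 + x) ≤ y / (1 + y) := by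
  rw [div_le_div_iff₀ (by linarith) (by linarith)]; nlinarith

lemma phi_sub {x y : ℝ} (hx : 0 ≤ x) (hy : 0 ≤ y) :
    (x + y) / (1 + (x + y)) ≤ x / (1 + x) + y / (1 + y) := by
  have h1 : x / (1 + (x + y)) ≤ x / (1 + x) := by gcongr; linarith
  have h2 : y / (1 + (x + y)) ≤ y / (1 + y) := by gcongr; linarith
  rw [add_div]; linarith

lemma phi_nonneg {x : ℝ} (hx : 0 ≤ x) : 0 ≤ x / (1 + x) := by positivity

lemma phi_le_one {x : ℝ} (hx : 0 ≤ x) : x / (1 + x) ≤ 1 := by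
  rw [div_le_one (by linarith)]; linarith

lemma summable_half : Summable fun n : ℕ => (1 / 2 : ℝ) ^ (n + 1) := by
  simpa [pow_succ] using (summable_geometric_two).mul_right (1 / 2 : ℝ)

lemma harm_summable (f g : HarmV) : Summable fun n : ℕ => (1 / 2 : ℝ) ^ (n + 1) *
    (deltaP (((n : ℝ) + 1) / ((n : ℝ) + 2)) f.1 g.1 /
      (1 + deltaP (((n : ℝ) + 1) / ((n : ℝ) + 2)) f.1 g.1)) := by
  refine Summable.of_nonneg_of_le (fun n => ?_) (fun n => ?_) summable_half
  · exact mul_nonneg (by positivity) (phi_nonneg (deltaP_nonneg _ _ _))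
  · exact mul_le_of_le_one_right (by positivity) (phi_le_one (deltaP_nonneg _ _ _))

lemma harmDist_tri (f k g : HarmV) : harmDist f g ≤ harmDist f k + harmDist k g := by
  unfold harmDist
  rw [← (harm_summable f k).tsum_add (harm_summable k g)]
  refine (harm_summable f g).tsum_le_tsum (fun n => ?_) ((harm_summable f k).add (harm_summable k g))
  rw [← mul_add]
  apply mul_le_mul_of_nonneg_left _ (by positivity)
  exact (phi_mono (deltaP_nonneg _ _ _) (deltaP_tri (pn_mem n) f k g)).trans
    (phi_sub (deltaP_nonneg _ _ _) (deltaP_nonneg _ _ _))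

lemma harmDist_self (f : HarmV) : harmDist f f = 0 := by
  unfold harmDist
  simp [deltaP_self (pn_mem _).1]

lemma delta_half_lt {f g : HarmV} {η : ℝ} (hη : 0 < η)
    (h : harmDist f g < (1 / 2) * (η / (1 + η))) : deltaP (1 / 2) f.1 g.1 < η := by
  by_contra hcon
  push Not at hcon
  have h1 := (harm_summable f g).le_tsum 0 (fun n _ =>
    mul_nonneg (by positivity) (phi_nonneg (deltaP_nonneg _ _ _)))
  have h2 : harmDist f g < _ := h
  unfold harmDist at h2
  have h3 := phi_mono hη.le hcon
  norm_num at h1 h2 h3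
  linarith

/-- openness of the sets used for the `G_δ` property -/
lemma open_level {q : ℝ} (hq : 0 < q) (hq1 : q ≤ 1) (C : ℝ) {r : ℝ} (hr : r ∈ Set.Ioo (0 : ℝ) 1) :
    @IsOpen HarmV (ballTopology harmDist) {f : HarmV | C < circMeanR q (fun z => (f.1 z).im) r} := by
  letI := ballTopology harmDist
  rw [isOpen_iff_forall_mem_open]
  intro f hf
  have hf' : C < circMeanR q (fun z => (f.1 z).im) r := hf
  set gap := circMeanR q (fun z => (f.1 z).im) r - C with hgap
  have hg : 0 < gap := by linarith
  set B := (gap / 2) ^ (1 / q) with hB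
  have hBpos : 0 < B := by positivity
  have hBq : B ^ q = gap / 2 := by
    rw [hB, ← Real.rpow_mul (by positivity), one_div, inv_mul_cancel₀ hq.ne', Real.rpow_one]
  have hr1 : 0 < 1 - r := by linarith [hr.2]
  set η := (1 - r) * Real.sqrt B / 16 with hη
  have hηpos : 0 < η := by positivity
  refine ⟨{g | harmDist f g < (1 / 2) * (η / (1 + η))}, ?_, ?_, ?_⟩
  · intro g hg'
    have hd := delta_half_lt hηpos hg'
    have hb : ∀ θ, |(f.1 (cpt r θ) - g.1 (cpt r θ)).im| ≤ B := by
      intro θ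
      have := hl_bound (f := fun z => f.1 z - g.1 z) (f.2.1.sub g.2.1)
        (by simp [f.2.2.1, g.2.2.1]) (δ := η)
        (fun s hs => (le_deltaP (by norm_num) f g hs).trans hd.le)
        (R := (1 + r) / 2) ⟨by linarith [hr.1], by linarith [hr.2]⟩ (z := cpt r θ)
        (by rw [norm_cpt hr.1.le]; linarith [hr.2])
      rw [norm_cpt hr.1.le] at this
      refine (Complex.abs_im_le_norm _).trans ?_
      have h1 : ((1 + r) / 2 - r) ^ 2 = (1 - r) ^ 2 / 4 := by ring
      have h2 : 64 * η ^ 2 = (1 - r) ^ 2 / 4 * B := by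
        rw [hη, div_pow, mul_pow, Real.sq_sqrt hBpos.le]; ring
      rw [h1, h2] at this
      exact le_of_mul_le_mul_left this (by positivity)
    have h1 := cm_le_const hq.le (f.cc_im_sub g hr) hb
    have h2 := cm_le_add hq.le hq1 (f.cc_im_sub g hr) (g.cc_im hr) (f.cc_im hr) (fun θ => by
      simp only [Complex.sub_im]
      have := abs_add_le ((f.1 (cpt r θ)).im - (g.1 (cpt r θ)).im) (g.1 (cpt r θ)).im
      simpa using this)
    show C < circMeanR q (fun z => (g.1 z).im) r
    rw [hBq] at h1
    linarith
  · exact TopologicalSpace.isOpen_generateFrom_of_mem ⟨f, _, by positivity, rfl⟩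
  · show harmDist f f < _
    rw [harmDist_self]; positivity

/-- The generic set. -/
def LL : Set HarmV := {f : HarmV | ∀ q : ℝ, 0 < q → ∀ C : ℝ, ∃ r ∈ Set.Ioo (0 : ℝ) 1,
        C < circMeanR q (fun z => (f.1 z).im) r}

lemma LL_gdelta : @IsGδ HarmV (ballTopology harmDist) LL := by
  letI := ballTopology harmDist
  have : LL = ⋂ mk : ℕ × ℕ, ⋃ r : Set.Ioo (0 : ℝ) 1,
      {f : HarmV | (mk.2 : ℝ) < circMeanR (1 / ((mk.1 : ℝ) + 1)) (fun z => (f.1 z).im) r} := by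
    ext f
    simp only [LL, Set.mem_iInter, Set.mem_iUnion, Set.mem_setOf_eq]
    constructor
    · intro h mk
      obtain ⟨r, hr, h⟩ := h (1 / ((mk.1 : ℝ) + 1)) (by positivity) mk.2
      exact ⟨⟨r, hr⟩, h⟩
    · intro h q hq C
      obtain ⟨m, hm⟩ := exists_nat_one_div_lt hq
      obtain ⟨k, hk⟩ := exists_nat_ge (C + 1)
      obtain ⟨r, hr⟩ := h (m, k)
      refine ⟨r, r.2, ?_⟩
      have h1 := cm_exp (by positivity) hm.le (f.cc_im r.2)
      simp only at hr
      linarith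
  rw [this]
  apply IsGδ.iInter_of_isOpen
  intro mk
  apply isOpen_iUnion
  intro r
  apply open_level (by positivity) _ _ r.2
  rw [div_le_one (by positivity)]
  have : (0 : ℝ) ≤ mk.1 := by positivity
  linarith

/-- `f + t h` -/
def pert (f h : HarmV) (t : ℝ) : HarmV :=
  ⟨fun z => f.1 z + (t : ℂ) * h.1 z, f.2.1.add (h.2.1.const_mul _), by simp [f.2.2.1, h.2.2.1], by
    intro p hp
    obtain ⟨C, hC⟩ := f.2.2.2 p hp
    obtain ⟨C', hC'⟩ := h.2.2.2 p hp
    refine ⟨C + |t| ^ p * C', fun r hr => ?_⟩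
    have h0 : CC (fun z => t * (h.1 z).re) r := by
      have : Continuous _ := h.cc_re hr
      exact continuous_const.mul this
    have h1 : CC (fun z => (f.1 z + (t : ℂ) * h.1 z).re) r :=
      cont_on_circle (Complex.continuous_re.comp_continuousOn
        (f.2.1.continuousOn.add (continuousOn_const.mul h.2.1.continuousOn))) hr
    refine (cm_le_add hp.1.le hp.2.le (f.cc_re hr) h0 h1 (fun θ => ?_)).trans
      (add_le_add (hC r hr) ?_)
    · simp only [Complex.add_re, Complex.mul_re, Complex.ofReal_re, Complex.ofReal_im, zero_mul,
        sub_zero]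
      exact abs_add_le _ _
    · rw [cm_smul]
      exact mul_le_mul_of_nonneg_left (hC' r hr) (by positivity)⟩

lemma deltaP_pert (f h : HarmV) {p : ℝ} (hp : p ∈ Set.Ioo (0 : ℝ) 1) :
    ∃ C : ℝ, ∀ t : ℝ, deltaP p f.1 (pert f h t).1 ≤ |t| ^ p * C := by
  obtain ⟨C, hC⟩ := h.2.2.2 p hp
  refine ⟨C, fun t => ciSup_le fun r => ?_⟩
  have : (fun z => (f.1 z - (pert f h t).1 z).re) = fun z => (-t) * (h.1 z).re := by
    ext z; simp [pert]
  rw [this, cm_smul, abs_neg]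
  exact mul_le_mul_of_nonneg_left (hC r r.2) (by positivity)

lemma harmDist_pert (f h : HarmV) :
    Filter.Tendsto (fun n : ℕ => harmDist f (pert f h (1 / ((n : ℝ) + 1)))) Filter.atTop (nhds 0) := by
  have h0 : (0 : ℝ) = ∑' n : ℕ, (0 : ℝ) := by simp
  rw [h0]
  unfold harmDist
  apply tendsto_tsum_of_dominated_convergence summable_half
  · intro k
    obtain ⟨C, hC⟩ := deltaP_pert f h (pn_mem k)
    set p := (((k : ℝ) + 1) / ((k : ℝ) + 2)) with hp
    have hp0 : 0 < p := (pn_mem k).1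
    have t1 : Filter.Tendsto (fun n : ℕ => |1 / ((n : ℝ) + 1)| ^ p * C) Filter.atTop (nhds 0) := by
      have := (tendsto_one_div_add_atTop_nhds_zero_nat (𝕜 := ℝ)).abs
      rw [abs_zero] at this
      have := (this.rpow_const (p := p) (Or.inr hp0.le)).mul_const C
      rwa [Real.zero_rpow hp0.ne', zero_mul] at this
    refine squeeze_zero (fun n => mul_nonneg (by positivity) (phi_nonneg (deltaP_nonneg _ _ _)))
      (fun n => ?_) t1
    refine le_trans ?_ (hC _)
    have hd := deltaP_nonneg p f.1 (pert f h (1 / ((n : ℝ) + 1))).1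
    have h1 : (1 / 2 : ℝ) ^ (k + 1) ≤ 1 := pow_le_one₀ (by norm_num) (by norm_num)
    refine (mul_le_of_le_one_left (phi_nonneg hd) h1).trans ?_
    exact div_le_self hd (by linarith)
  · refine Filter.Eventually.of_forall fun n k => ?_
    rw [Real.norm_eq_abs, abs_of_nonneg (mul_nonneg (by positivity) (phi_nonneg (deltaP_nonneg _ _ _)))]
    exact mul_le_of_le_one_right (by positivity) (phi_le_one (deltaP_nonneg _ _ _))

lemma pert_mem (f h : HarmV) (hf : f ∉ LL) (hh : h ∈ LL) {t : ℝ} (ht : t ≠ 0) : pert f h t ∈ LL := by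
  by_contra hcon
  simp only [LL, Set.mem_setOf_eq, not_forall, not_exists, not_and, not_lt] at hf hcon
  obtain ⟨q, hq, C, hC⟩ := hf
  obtain ⟨q', hq', C', hC'⟩ := hcon
  set s := min (min q q') 1 with hs
  have hs0 : 0 < s := by simp [hs, hq, hq']
  have hs1 : s ≤ 1 := min_le_right _ _
  have hsq : s ≤ q := (min_le_left _ _).trans (min_le_left _ _)
  have hsq' : s ≤ q' := (min_le_left _ _).trans (min_le_right _ _)
  obtain ⟨r, hr, h1⟩ := hh s hs0 (((1 + C) + (1 + C')) / |t| ^ s)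
  have hts : 0 < |t| ^ s := Real.rpow_pos_of_pos (abs_pos.2 ht) _
  rw [div_lt_iff₀ hts, mul_comm, ← cm_smul] at h1
  have h2 := cm_exp hs0 hsq (f.cc_im hr)
  have h3 := cm_exp hs0 hsq' ((pert f h t).cc_im hr)
  have h0 : CC (fun z => t * (h.1 z).im) r := by
    have : Continuous _ := h.cc_im hr
    exact continuous_const.mul this
  have h4 := cm_le_add hs0.le hs1 (f.cc_im hr) ((pert f h t).cc_im hr) h0 (fun θ => by
    have : t * (h.1 (cpt r θ)).im = ((pert f h t).1 (cpt r θ)).im - (f.1 (cpt r θ)).im := by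
      simp [pert]
    rw [this, add_comm]
    exact abs_sub _ _)
  have h5 := hC r hr
  have h6 := hC' r hr
  linarith

lemma LL_dense (h : HarmV) (hh : h ∈ LL) : @Dense HarmV (ballTopology harmDist) LL := by
  letI := ballTopology harmDist
  intro f
  by_cases hf : f ∈ LL
  · exact subset_closure hf
  have ht : Filter.Tendsto (fun n : ℕ => pert f h (1 / ((n : ℝ) + 1))) Filter.atTop (nhds f) := by
    apply TopologicalSpace.tendsto_nhds_generateFrom_iff.2
    rintro _ ⟨x, ε, hε, rfl⟩ hx
    have hx' : harmDist x f < ε := hx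
    have := (harmDist_pert f h).eventually (gt_mem_nhds (sub_pos.2 hx'))
    filter_upwards [this] with n hn
    show harmDist x _ < ε
    have := harmDist_tri x f (pert f h (1 / ((n : ℝ) + 1)))
    linarith
  exact mem_closure_of_tendsto ht (Filter.Eventually.of_forall fun n =>
    pert_mem f h hf hh (by positivity))
/-- basic block -/
def vv (z : ℂ) : ℂ := z / (1 - z ^ 2)

lemma one_sub_sq_ne {z : ℂ} (hz : ‖z‖ < 1) : 1 - z ^ 2 ≠ 0 := by
  intro h
  have h1 : (1 : ℂ) = z ^ 2 := sub_eq_zero.1 h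
  have h2 := congrArg norm h1
  rw [norm_one, norm_pow] at h2
  nlinarith [norm_nonneg z]

lemma norm_vv_le {z : ℂ} {r : ℝ} (hz : ‖z‖ ≤ r) (hr : r < 1) : ‖vv z‖ ≤ ‖z‖ / (1 - r) := by
  unfold vv
  rw [norm_div]
  have h1 : 1 - r ≤ ‖1 - z ^ 2‖ := by
    have := norm_sub_norm_le (1 : ℂ) (z ^ 2)
    rw [norm_one, norm_pow] at this
    nlinarith [norm_nonneg z]
  have : 0 < 1 - r := by linarith
  gcongr

lemma le_norm_vv {z : ℂ} (hz : ‖z‖ < 1) : ‖z‖ / 2 ≤ ‖vv z‖ := by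
  unfold vv
  rw [norm_div]
  have h1 : ‖1 - z ^ 2‖ ≤ 2 := by
    have := norm_sub_le (1 : ℂ) (z ^ 2)
    rw [norm_one, norm_pow] at this
    nlinarith [norm_nonneg z]
  have : 0 < ‖1 - z ^ 2‖ := norm_pos_iff.2 (one_sub_sq_ne hz)
  gcongr

lemma re_vv (z : ℂ) : (vv z).re = z.re * (1 - ‖z‖ ^ 2) / ‖1 - z ^ 2‖ ^ 2 := by
  unfold vv
  rw [Complex.div_re, ← Complex.normSq_eq_norm_sq, ← Complex.normSq_eq_norm_sq, ← add_div]
  congr 1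
  rw [Complex.normSq_apply]
  simp [pow_two]
  ring

lemma pow_norm_lt {z : ℂ} (hz : ‖z‖ < 1) (n : ℕ) : ‖z ^ (2 ^ n)‖ < 1 := by
  rw [norm_pow]; exact pow_lt_one₀ (norm_nonneg _) hz (by positivity)

lemma norm_block_le {z : ℂ} {r : ℝ} (hz : ‖z‖ ≤ r) (hr : r < 1) (n : ℕ) :
    ‖vv (z ^ (2 ^ n))‖ ≤ r ^ n / (1 - r) := by
  have h0 : 0 ≤ r := (norm_nonneg z).trans hz
  have h1 : ‖z ^ (2 ^ n)‖ ≤ r ^ n := by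
    rw [norm_pow]
    calc ‖z‖ ^ (2 ^ n) ≤ r ^ (2 ^ n) := by gcongr
      _ ≤ r ^ n := pow_le_pow_of_le_one h0 hr.le (Nat.lt_two_pow_self).le
  have h2 : ‖z ^ (2 ^ n)‖ ≤ r := by
    rw [norm_pow]
    calc ‖z‖ ^ (2 ^ n) ≤ r ^ (2 ^ n) := by gcongr
      _ ≤ r := pow_le_of_le_one h0 hr.le (by positivity)
  refine (norm_vv_le h2 hr).trans ?_
  have : 0 < 1 - r := by linarith
  gcongr


open BoundedContinuousFunction

/-- the lacunary series -/
def ff (a : ℕ →ᵇ ℝ) (z : ℂ) : ℂ := ∑' n : ℕ, (a n : ℂ) * vv (z ^ (2 ^ n))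

lemma term_le (a : ℕ →ᵇ ℝ) {z : ℂ} {r : ℝ} (hz : ‖z‖ ≤ r) (hr : r < 1) (n : ℕ) :
    ‖(a n : ℂ) * vv (z ^ (2 ^ n))‖ ≤ ‖a‖ * (r ^ n / (1 - r)) := by
  rw [norm_mul, Complex.norm_real]
  exact mul_le_mul (a.norm_coe_le_norm n) (norm_block_le hz hr n) (norm_nonneg _) (norm_nonneg _)

lemma bound_hasSum (A : ℝ) {r : ℝ} (h0 : 0 ≤ r) (hr : r < 1) :
    HasSum (fun n : ℕ => A * (r ^ n / (1 - r))) (A * ((1 - r)⁻¹ / (1 - r))) :=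
  ((hasSum_geometric_of_lt_one h0 hr).div_const _).mul_left A

lemma ff_summable (a : ℕ →ᵇ ℝ) {z : ℂ} (hz : ‖z‖ < 1) :
    Summable fun n : ℕ => (a n : ℂ) * vv (z ^ (2 ^ n)) :=
  Summable.of_norm_bounded (bound_hasSum ‖a‖ (norm_nonneg z) hz).summable
    (term_le a le_rfl hz)

lemma norm_ff_le (a : ℕ →ᵇ ℝ) {z : ℂ} {r : ℝ} (hz : ‖z‖ ≤ r) (hr : r < 1) :
    ‖ff a z‖ ≤ ‖a‖ * ((1 - r)⁻¹ / (1 - r)) :=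
  tsum_of_norm_bounded (bound_hasSum ‖a‖ ((norm_nonneg z).trans hz) hr) (term_le a hz hr)

lemma ff_sub (a b : ℕ →ᵇ ℝ) {z : ℂ} (hz : ‖z‖ < 1) : ff (a - b) z = ff a z - ff b z := by
  unfold ff
  rw [← (ff_summable a hz).tsum_sub (ff_summable b hz)]
  congr 1; ext n; simp; ring

lemma ff_zero (a : ℕ →ᵇ ℝ) : ff a 0 = 0 := by
  simp [ff, vv]

lemma block_diff (n : ℕ) : DifferentiableOn ℂ (fun z => vv (z ^ (2 ^ n))) (Metric.ball 0 1) := by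
  unfold vv
  apply DifferentiableOn.div (by fun_prop) (by fun_prop)
  intro z hz
  exact one_sub_sq_ne (pow_norm_lt (by simpa using hz) n)

lemma ff_diff (a : ℕ →ᵇ ℝ) : DifferentiableOn ℂ (ff a) (Metric.ball 0 1) := by
  intro z hz
  have hz' : ‖z‖ < 1 := by simpa using hz
  obtain ⟨r, hzr, hr⟩ := exists_between hz'
  have h0 : 0 ≤ r := (norm_nonneg z).trans hzr.le
  have : DifferentiableOn ℂ (ff a) (Metric.ball 0 r) := by
    apply Complex.differentiableOn_tsum_of_summable_norm (bound_hasSum ‖a‖ h0 hr).summable _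
      Metric.isOpen_ball
    · intro n w hw
      exact term_le a (by simpa using (mem_ball_zero_iff.1 hw).le) hr n
    · intro n
      exact ((block_diff n).mono (Metric.ball_subset_ball hr.le)).const_mul _
  exact (this.differentiableAt (Metric.isOpen_ball.mem_nhds (by simpa using hzr))).differentiableWithinAt

lemma norm_one_sub_cpt (R τ : ℝ) : ‖1 - cpt R τ‖ ^ 2 = 1 - 2 * R * Real.cos τ + R ^ 2 := by
  rw [← Complex.normSq_eq_norm_sq, Complex.normSq_apply]
  have h1 : (cpt R τ).re = R * Real.cos τ := by
    simp [cpt, Complex.exp_ofReal_mul_I_re, Complex.exp_ofReal_mul_I_im]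
  have h2 : (cpt R τ).im = R * Real.sin τ := by
    simp [cpt, Complex.exp_ofReal_mul_I_re, Complex.exp_ofReal_mul_I_im]
  simp only [Complex.sub_re, Complex.sub_im, Complex.one_re, Complex.one_im, h1, h2]
  have := Real.sin_sq_add_cos_sq τ
  linear_combination R ^ 2 * this

lemma kernel_bound {p ρ τ : ℝ} (hp : p ∈ Set.Ioo (0 : ℝ) 1) (hρ : ρ ∈ Set.Ioo (0 : ℝ) 1)
    (hτ : |τ| ≤ Real.pi) (hτ0 : τ ≠ 0) :
    (ρ * (1 - ρ ^ 2) / ‖1 - cpt (ρ ^ 2) τ‖ ^ 2) ^ p ≤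
      ρ ^ p * (1 - ρ ^ 2) ^ (p * (1 - p)) * (|τ| / Real.pi) ^ (-(p * (2 - p))) := by
  have hpi := Real.pi_pos
  set R := ρ ^ 2 with hR
  have hR0 : 0 < R := pow_pos hρ.1 2
  have hR1 : R < 1 := by rw [hR]; nlinarith [hρ.1, hρ.2]
  set E := ‖1 - cpt R τ‖ with hE
  have hE0 : 0 ≤ E := norm_nonneg _
  have hEsq : E ^ 2 = 1 - 2 * R * Real.cos τ + R ^ 2 := norm_one_sub_cpt R τ
  set x := 1 - R with hx
  have hx0 : 0 < x := by linarith
  set y := |τ| / Real.pi with hy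
  have hy0 : 0 < y := by have := abs_pos.2 hτ0; positivity
  have hy1 : y ≤ 1 := by rw [hy, div_le_one hpi]; exact hτ
  have hcos : Real.cos τ ≤ 1 - 2 * y ^ 2 := by
    have := Real.cos_le_one_sub_mul_cos_sq hτ
    have e : 2 / Real.pi ^ 2 * τ ^ 2 = 2 * y ^ 2 := by
      rw [hy, div_pow, sq_abs]; ring
    rwa [e] at this
  have hExx : x ≤ E := by
    apply le_of_sq_le_sq _ hE0
    rw [hEsq]
    nlinarith [Real.cos_le_one τ]
  have hEy : y ≤ E := by
    apply le_of_sq_le_sq _ hE0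
    rw [hEsq]
    have h1 : y ^ 2 ≤ 1 := by nlinarith
    have h2 : R * Real.cos τ ≤ R * (1 - 2 * y ^ 2) := by gcongr
    nlinarith [mul_nonneg (sq_nonneg (1 - R)) (sub_nonneg.2 h1), mul_nonneg (sq_nonneg R) (sq_nonneg y)
      , mul_nonneg hR0.le (sq_nonneg y)]
  have hEpos : 0 < E := hx0.trans_le hExx
  have hE2 : x ^ p * y ^ (2 - p) ≤ E ^ 2 := by
    calc x ^ p * y ^ (2 - p) ≤ E ^ p * E ^ (2 - p) := by
          have := hp.1; have := hp.2
          gcongr <;> linarith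
      _ = E ^ 2 := by
          rw [← Real.rpow_add hEpos]; norm_num
  have h3 : ρ * x / E ^ 2 ≤ ρ * (x ^ (1 - p) * y ^ (-(2 - p))) := by
    rw [mul_div_assoc]
    apply mul_le_mul_of_nonneg_left _ hρ.1.le
    calc x / E ^ 2 ≤ x / (x ^ p * y ^ (2 - p)) := by gcongr
      _ = _ := by
        rw [Real.rpow_neg hy0.le, Real.rpow_sub hx0, Real.rpow_one]
        field_simp
  calc _ ≤ (ρ * (x ^ (1 - p) * y ^ (-(2 - p)))) ^ p :=
        Real.rpow_le_rpow (by have := hρ.1; positivity) h3 hp.1.le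
    _ = _ := by
        rw [Real.mul_rpow hρ.1.le (by positivity), Real.mul_rpow (by positivity) (by positivity),
          ← Real.rpow_mul hx0.le, ← Real.rpow_mul hy0.le, ← mul_assoc]
        congr 3 <;> ring

lemma abs_rpow_ii {s : ℝ} (hs : s < 1) :
    IntervalIntegrable (fun τ : ℝ => (|τ| / Real.pi) ^ (-s)) MeasureTheory.volume
      (-Real.pi) Real.pi := by
  have hpi := Real.pi_pos
  have h1 : IntervalIntegrable (fun τ : ℝ => (|τ| / Real.pi) ^ (-s)) MeasureTheory.volume
      0 Real.pi := by
    have : IntervalIntegrable (fun τ : ℝ => τ ^ (-s) * (Real.pi ^ (-s))⁻¹) MeasureTheory.volume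
      0 Real.pi := (intervalIntegral.intervalIntegrable_rpow' (by linarith)).mul_const _
    refine this.congr ?_
    intro τ hτ
    rw [Set.uIoc_of_le hpi.le] at hτ
    simp only
    rw [abs_of_pos hτ.1, Real.div_rpow hτ.1.le hpi.le, div_eq_mul_inv]
  have h2 : IntervalIntegrable (fun τ : ℝ => (|τ| / Real.pi) ^ (-s)) MeasureTheory.volume
      (-Real.pi) 0 := by
    have := (IntervalIntegrable.iff_comp_neg (f := fun τ : ℝ => (|τ| / Real.pi) ^ (-s))
      (a := 0) (b := Real.pi)).1 h1
    simp only [abs_neg, neg_zero] at this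
    exact this.symm
  exact h2.trans h1

lemma periodic_integral {G : ℝ → ℝ} (hG : Continuous G) (hper : Function.Periodic G (2 * Real.pi))
    {m : ℕ} (hm : 0 < m) :
    ∫ θ in (-Real.pi)..Real.pi, G (m * θ) = ∫ θ in (-Real.pi)..Real.pi, G θ := by
  have hm' : (m : ℝ) ≠ 0 := by positivity
  rw [intervalIntegral.integral_comp_mul_left _ hm']
  have h1 := hper.intervalIntegral_add_zsmul_eq (m : ℤ) (m * -Real.pi)
    (fun a b => hG.intervalIntegrable a b)
  have h2 := hper.intervalIntegral_add_eq (m * -Real.pi) (-Real.pi)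
  rw [h2] at h1
  have e1 : (m : ℝ) * -Real.pi + (m : ℤ) • (2 * Real.pi) = m * Real.pi := by
    simp; ring
  have e2 : -Real.pi + 2 * Real.pi = Real.pi := by ring
  rw [e1, e2] at h1
  rw [h1]
  simp [hm']

lemma block_cc (n : ℕ) {r : ℝ} (hr : r ∈ Set.Ioo (0 : ℝ) 1) :
    CC (fun z => (vv (z ^ (2 ^ n))).re) r :=
  cont_on_circle (Complex.continuous_re.comp_continuousOn (block_diff n).continuousOn) hr

lemma block_mean {p : ℝ} (hp : p ∈ Set.Ioo (0 : ℝ) 1) : ∃ K : ℝ, 0 ≤ K ∧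
    ∀ (n : ℕ) (r : ℝ), r ∈ Set.Ioo (0 : ℝ) 1 →
      circMeanR p (fun z => (vv (z ^ (2 ^ n))).re) r ≤
        K * ((r ^ (2 ^ n)) ^ p * (1 - (r ^ (2 ^ n)) ^ 2) ^ (p * (1 - p))) := by
  have hpi := Real.pi_pos
  refine ⟨(1 / (2 * Real.pi)) * ∫ τ in (-Real.pi)..Real.pi, (|τ| / Real.pi) ^ (-(p * (2 - p))),
    ?_, ?_⟩
  · apply mul_nonneg (by positivity)
    exact intervalIntegral.integral_nonneg (by linarith) (fun τ _ => by positivity)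
  intro n r hr
  set ρ := r ^ (2 ^ n) with hρ'
  have hρ : ρ ∈ Set.Ioo (0 : ℝ) 1 :=
    ⟨pow_pos hr.1 _, pow_lt_one₀ hr.1.le hr.2 (by positivity)⟩
  have hR1 : 0 < 1 - ρ ^ 2 := by nlinarith [hρ.1, hρ.2]
  set G : ℝ → ℝ := fun τ => (ρ * (1 - ρ ^ 2) / ‖1 - cpt (ρ ^ 2) τ‖ ^ 2) ^ p with hG
  have hne : ∀ τ, ‖1 - cpt (ρ ^ 2) τ‖ ^ 2 ≠ 0 := by
    intro τ h
    rw [norm_one_sub_cpt] at h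
    nlinarith [Real.cos_le_one τ, hρ.1, sq_nonneg ρ]
  have hGc : Continuous G := by
    apply Continuous.rpow_const _ (fun _ => Or.inr hp.1.le)
    apply continuous_const.div _ hne
    have := continuous_cpt (ρ ^ 2)
    fun_prop
  have hGp : Function.Periodic G (2 * Real.pi) := by
    intro τ
    simp only [hG, norm_one_sub_cpt, Real.cos_add_two_pi]
  rw [cm_def]
  have h1 : ∫ θ in (-Real.pi)..Real.pi, |(vv (cpt r θ ^ (2 ^ n))).re| ^ p ≤
      ∫ θ in (-Real.pi)..Real.pi, G ((2 ^ (n + 1) : ℕ) * θ) := by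
    apply intervalIntegral.integral_mono_on (by linarith) ((block_cc n hr).ii hp.1.le _ _)
    · apply Continuous.intervalIntegrable
      exact hGc.comp (continuous_const.mul continuous_id)
    intro θ _
    apply Real.rpow_le_rpow (abs_nonneg _) _ hp.1.le
    rw [re_vv]
    have e1 : (cpt r θ ^ 2 ^ n) ^ 2 = cpt (ρ ^ 2) ((2 ^ (n + 1) : ℕ) * θ) := by
      rw [cpt_pow, cpt_pow]
      congr 1
      push_cast; ring
    have e2 : ‖cpt r θ ^ 2 ^ n‖ = ρ := by rw [norm_pow, norm_cpt hr.1.le]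
    rw [e1, e2, abs_div, abs_mul, abs_of_pos hR1, abs_of_nonneg (sq_nonneg ‖1 - cpt _ _‖)]
    have := Complex.abs_re_le_norm (cpt r θ ^ 2 ^ n)
    rw [e2] at this
    gcongr
  rw [periodic_integral hGc hGp (by positivity)] at h1
  have hs : p * (2 - p) < 1 := by nlinarith [hp.1, hp.2, mul_pos (sub_pos.2 hp.2) (sub_pos.2 hp.2)]
  have h2 : ∫ θ in (-Real.pi)..Real.pi, G θ ≤ ∫ τ in (-Real.pi)..Real.pi,
      ρ ^ p * (1 - ρ ^ 2) ^ (p * (1 - p)) * (|τ| / Real.pi) ^ (-(p * (2 - p))) := by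
    apply intervalIntegral.integral_mono_ae_restrict (by linarith) (hGc.intervalIntegrable _ _)
      ((abs_rpow_ii hs).const_mul _)
    have hz : ∀ᵐ τ : ℝ ∂(MeasureTheory.volume.restrict (Set.Icc (-Real.pi) Real.pi)), τ ≠ 0 :=
      MeasureTheory.ae_restrict_of_ae (MeasureTheory.Measure.ae_ne _ 0)
    filter_upwards [hz, MeasureTheory.ae_restrict_mem measurableSet_Icc] with τ h0 hτ
    exact kernel_bound hp hρ (abs_le.2 hτ) h0
  rw [intervalIntegral.integral_const_mul] at h2
  calc _ ≤ 1 / (2 * Real.pi) * (ρ ^ p * (1 - ρ ^ 2) ^ (p * (1 - p)) *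
        ∫ τ in (-Real.pi)..Real.pi, (|τ| / Real.pi) ^ (-(p * (2 - p)))) := by
        apply mul_le_mul_of_nonneg_left (h1.trans h2) (by positivity)
    _ = _ := by ring

lemma tel {β x : ℝ} (hβ : 0 < β) (hβ1 : β ≤ 1) (hx0 : 0 ≤ x) (hx1 : x ≤ 1) :
    (2 ^ β - 1) * (x * (1 - x) ^ β) ≤ (1 - x ^ 2) ^ β - (1 - x) ^ β := by
  have h1 : (1 - x ^ 2) ^ β = (1 - x) ^ β * (1 + x) ^ β := by
    rw [← Real.mul_rpow (by linarith) (by linarith)]; congr 1; ring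
  have h2 := (Real.concaveOn_rpow hβ.le hβ1).2 (x := 1) (y := 2) (by simp) (by simp)
    (sub_nonneg.2 hx1) hx0 (by ring)
  simp only [smul_eq_mul, Real.one_rpow, mul_one] at h2
  rw [show 1 - x + x * 2 = 1 + x by ring] at h2
  have h3 : 0 ≤ (1 - x) ^ β := Real.rpow_nonneg (by linarith) _
  rw [h1]
  nlinarith [mul_le_mul_of_nonneg_left h2 h3]

lemma sum_bound {p : ℝ} (hp : p ∈ Set.Ioo (0 : ℝ) 1) : ∃ C : ℝ, 0 ≤ C ∧
    ∀ (N : ℕ) (r : ℝ), r ∈ Set.Ioo (0 : ℝ) 1 →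
      ∑ n ∈ Finset.range N, ((r ^ (2 ^ n)) ^ p * (1 - (r ^ (2 ^ n)) ^ 2) ^ (p * (1 - p))) ≤ C := by
  obtain ⟨hp0, hp1⟩ := hp
  set β := p * (1 - p) with hβ'
  have hβ : 0 < β := mul_pos hp0 (by linarith)
  have hβ1 : β ≤ 1 := by nlinarith
  have h2β : 0 < (2 : ℝ) ^ β - 1 := by
    have := Real.one_lt_rpow (by norm_num : (1 : ℝ) < 2) hβ; linarith
  refine ⟨(2 / p) ^ β / (2 ^ β - 1), by positivity, ?_⟩
  intro N r hr
  set y : ℕ → ℝ := fun n => (r ^ (2 ^ n)) ^ p with hy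
  have hρ : ∀ n, r ^ (2 ^ n) ∈ Set.Ioo (0 : ℝ) 1 := fun n =>
    ⟨pow_pos hr.1 _, pow_lt_one₀ hr.1.le hr.2 (by positivity)⟩
  have hy0 : ∀ n, 0 < y n := fun n => Real.rpow_pos_of_pos (hρ n).1 _
  have hy1 : ∀ n, y n < 1 := fun n => Real.rpow_lt_one (hρ n).1.le (hρ n).2 hp0
  have hys : ∀ n, y (n + 1) = y n ^ 2 := by
    intro n
    simp only [hy]
    rw [pow_succ, pow_mul, ← Real.rpow_natCast, ← Real.rpow_natCast (_ ^ p), ← Real.rpow_mul (hρ n).1.le,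
      ← Real.rpow_mul (hρ n).1.le, mul_comm]
  have hterm : ∀ n, (r ^ (2 ^ n)) ^ p * (1 - (r ^ (2 ^ n)) ^ 2) ^ β ≤
      (2 / p) ^ β / (2 ^ β - 1) * ((1 - y (n + 1)) ^ β - (1 - y n) ^ β) := by
    intro n
    have ht := tel hβ hβ1 (hy0 n).le (hy1 n).le
    rw [← hys] at ht
    set ρ := r ^ (2 ^ n)
    have hρn : ρ ∈ Set.Ioo (0 : ℝ) 1 := hρ n
    have hb := one_add_mul_self_le_rpow_one_add (s := y n - 1) (p := 1 / p) (by linarith [hy0 n])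
      (by rw [le_div_iff₀ hp0]; linarith)
    have e : (1 + (y n - 1)) ^ (1 / p) = ρ := by
      rw [add_sub_cancel]
      show (ρ ^ p) ^ (1 / p) = ρ
      rw [← Real.rpow_mul hρn.1.le, mul_one_div_cancel hp0.ne', Real.rpow_one]
    rw [e] at hb
    have h1 : 1 - ρ ^ 2 ≤ 2 / p * (1 - y n) := by
      have : 1 - ρ ^ 2 ≤ 2 * (1 - ρ) := by nlinarith [sq_nonneg (1 - ρ)]
      have h3 : 1 - ρ ≤ 1 / p * (1 - y n) := by linarith
      calc _ ≤ 2 * (1 / p * (1 - y n)) := by linarith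
        _ = _ := by ring
    have h2 : (1 - ρ ^ 2) ^ β ≤ (2 / p) ^ β * (1 - y n) ^ β := by
      rw [← Real.mul_rpow (by positivity) (by linarith [hy1 n])]
      exact Real.rpow_le_rpow (by nlinarith [hρn.1, hρn.2]) h1 hβ.le
    calc ρ ^ p * (1 - ρ ^ 2) ^ β ≤ y n * ((2 / p) ^ β * (1 - y n) ^ β) :=
          mul_le_mul_of_nonneg_left h2 (hy0 n).le
      _ = (2 / p) ^ β / (2 ^ β - 1) * ((2 ^ β - 1) * (y n * (1 - y n) ^ β)) := by
          field_simp
      _ ≤ _ := mul_le_mul_of_nonneg_left ht (by positivity)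
  calc _ ≤ ∑ n ∈ Finset.range N, (2 / p) ^ β / (2 ^ β - 1) * ((1 - y (n + 1)) ^ β - (1 - y n) ^ β) :=
        Finset.sum_le_sum (fun n _ => hterm n)
    _ = (2 / p) ^ β / (2 ^ β - 1) * ((1 - y N) ^ β - (1 - y 0) ^ β) := by
        rw [← Finset.mul_sum, Finset.sum_range_sub (fun n => (1 - y n) ^ β)]
    _ ≤ (2 / p) ^ β / (2 ^ β - 1) * 1 := by
        apply mul_le_mul_of_nonneg_left _ (by positivity)
        have h1 : (1 - y N) ^ β ≤ 1 :=
          Real.rpow_le_one (by linarith [hy1 N]) (by linarith [hy0 N]) hβ.le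
        have h2 : 0 ≤ (1 - y 0) ^ β := Real.rpow_nonneg (by linarith [hy1 0]) _
        linarith
    _ = _ := mul_one _

lemma partial_cc (a : ℕ →ᵇ ℝ) (N : ℕ) {r : ℝ} (hr : r ∈ Set.Ioo (0 : ℝ) 1) :
    CC (fun z => (∑ n ∈ Finset.range N, (a n : ℂ) * vv (z ^ (2 ^ n))).re) r := by
  refine cont_on_circle (f := fun z => (∑ n ∈ Finset.range N, (a n : ℂ) * vv (z ^ (2 ^ n))).re) ?_ hr
  apply Complex.continuous_re.comp_continuousOn
  apply continuousOn_finset_sum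
  intro n _
  exact continuousOn_const.mul (block_diff n).continuousOn

lemma re_bound (a : ℕ →ᵇ ℝ) {p : ℝ} (hp : p ∈ Set.Ioo (0 : ℝ) 1) : ∃ C : ℝ,
    ∀ r ∈ Set.Ioo (0 : ℝ) 1, circMeanR p (fun z => (ff a z).re) r ≤ C := by
  obtain ⟨K, hK0, hK⟩ := block_mean hp
  obtain ⟨C, hC0, hC⟩ := sum_bound hp
  have hp0 := hp.1
  refine ⟨‖a‖ ^ p * (K * C), ?_⟩
  intro r hr
  have hpart : ∀ N : ℕ, circMeanR p
      (fun z => (∑ n ∈ Finset.range N, (a n : ℂ) * vv (z ^ (2 ^ n))).re) r ≤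
      ‖a‖ ^ p * (K * ∑ n ∈ Finset.range N,
        ((r ^ (2 ^ n)) ^ p * (1 - (r ^ (2 ^ n)) ^ 2) ^ (p * (1 - p)))) := by
    intro N
    induction N with
    | zero =>
      have := cm_le_const hp0.le (partial_cc a 0 hr) (B := 0) (by intro θ; simp)
      simpa [Real.zero_rpow hp0.ne'] using this
    | succ N ih =>
      have hblk : circMeanR p (fun z => a N * (vv (z ^ (2 ^ N))).re) r ≤
          ‖a‖ ^ p * (K * ((r ^ (2 ^ N)) ^ p * (1 - (r ^ (2 ^ N)) ^ 2) ^ (p * (1 - p)))) := by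
        rw [cm_smul]
        apply mul_le_mul _ (hK N r hr) (cm_nonneg _ _ _) (by positivity)
        exact Real.rpow_le_rpow (abs_nonneg _) (a.norm_coe_le_norm N) hp0.le
      have := cm_le_add hp0.le hp.2.le (partial_cc a N hr)
        (v := fun z => a N * (vv (z ^ (2 ^ N))).re)
        (continuous_const.mul (block_cc N hr)) (partial_cc a (N + 1) hr)
        (by
          intro θ
          rw [Finset.sum_range_succ, Complex.add_re, Complex.re_ofReal_mul]
          exact abs_add_le _ _)
      rw [Finset.sum_range_succ, mul_add, mul_add]
      linarith
  apply le_of_forall_pos_le_add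
  intro δ hδ
  set ε := δ ^ (1 / p) with hε
  have hε0 : 0 < ε := Real.rpow_pos_of_pos hδ _
  have hεp : ε ^ p = δ := by
    rw [hε, ← Real.rpow_mul hδ.le, one_div_mul_cancel hp0.ne', Real.rpow_one]
  have hu := tendstoUniformlyOn_tsum_nat (f := fun (n : ℕ) (z : ℂ) => (a n : ℂ) * vv (z ^ (2 ^ n)))
    (s := Metric.closedBall 0 r) (bound_hasSum ‖a‖ hr.1.le hr.2).summable
    (fun n z hz => term_le a (by simpa using hz) hr.2 n)
  obtain ⟨N, hN⟩ := (Metric.tendstoUniformlyOn_iff.1 hu ε hε0).exists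
  have hffc : CC (fun z => (ff a z).re) r :=
    cont_on_circle (Complex.continuous_re.comp_continuousOn (ff_diff a).continuousOn) hr
  have hdc : CC (fun z => (ff a z).re -
      (∑ n ∈ Finset.range N, (a n : ℂ) * vv (z ^ (2 ^ n))).re) r :=
    Continuous.sub hffc (partial_cc a N hr)
  have h1 := cm_le_add hp0.le hp.2.le (partial_cc a N hr) hdc hffc
    (by
      intro θ
      have := abs_add_le ((∑ n ∈ Finset.range N, (a n : ℂ) * vv (cpt r θ ^ (2 ^ n))).re)
        ((ff a (cpt r θ)).re - (∑ n ∈ Finset.range N, (a n : ℂ) * vv (cpt r θ ^ (2 ^ n))).re)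
      simpa using this)
  have h2 := cm_le_const hp0.le hdc (B := ε) (by
    intro θ
    have h := hN (cpt r θ) (by simp [norm_cpt hr.1.le])
    rw [dist_eq_norm] at h
    rw [← Complex.sub_re]
    exact (Complex.abs_re_le_norm _).trans h.le)
  have h3 := hpart N
  have h4 : ‖a‖ ^ p * (K * ∑ n ∈ Finset.range N,
        ((r ^ (2 ^ n)) ^ p * (1 - (r ^ (2 ^ n)) ^ 2) ^ (p * (1 - p)))) ≤ ‖a‖ ^ p * (K * C) := by
    have := hC N r hr
    gcongr
  rw [hεp] at h2
  linarith

/-- the lacunary series as an element of the space -/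
def ffV (a : ℕ →ᵇ ℝ) : HarmV :=
  ⟨ff a, ff_diff a, by rw [ff_zero]; rfl, fun _ hp => re_bound a hp⟩

/-- signs -/
def sg (S : Finset ℕ) (n : ℕ) : ℝ := if n ∈ S then 1 else -1

/-- random signed sum -/
def XX (c : ℕ → ℂ) (S : Finset ℕ) (J : ℕ) : ℂ := ∑ n ∈ Finset.range J, (sg S n : ℂ) * c n

lemma XX_step (c : ℕ → ℂ) (J : ℕ) (g : ℂ → ℝ) :
    ∑ S ∈ (Finset.range (J + 1)).powerset, g (XX c S (J + 1)) =
    ∑ S ∈ (Finset.range J).powerset, (g (XX c S J - c J) + g (XX c S J + c J)) := by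
  rw [Finset.range_add_one, Finset.sum_powerset_insert (by simp), ← Finset.sum_add_distrib]
  apply Finset.sum_congr rfl
  intro S hS
  rw [Finset.mem_powerset] at hS
  have hJ : J ∉ S := fun h => by simpa using hS h
  have h1 : XX c S (J + 1) = XX c S J - c J := by
    simp [XX, Finset.sum_range_succ, sg, hJ, sub_eq_add_neg]
  have h2 : XX c (insert J S) (J + 1) = XX c S J + c J := by
    unfold XX
    rw [Finset.sum_range_succ]
    congr 1
    · apply Finset.sum_congr rfl
      intro n hn
      have : n ≠ J := (Finset.mem_range.1 hn).ne
      simp [sg, this]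
    · simp [sg]
  rw [h1, h2]

lemma sq_id (x a : ℂ) : ‖x - a‖ ^ 2 + ‖x + a‖ ^ 2 = 2 * ‖x‖ ^ 2 + 2 * ‖a‖ ^ 2 := by
  have := parallelogram_law_with_norm ℝ x a
  nlinarith

lemma four_id (x a : ℂ) : ‖x - a‖ ^ 4 + ‖x + a‖ ^ 4 ≤
    2 * ‖x‖ ^ 4 + 12 * ‖x‖ ^ 2 * ‖a‖ ^ 2 + 2 * ‖a‖ ^ 4 := by
  have h1 := norm_sub_sq_real x a
  have h2 := norm_add_sq_real x a
  have h3 := abs_real_inner_le_norm x a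
  have h4 : (inner ℝ x a) ^ 2 ≤ (‖x‖ * ‖a‖) ^ 2 := by
    rw [← sq_abs]; gcongr
  rw [show ‖x - a‖ ^ 4 = (‖x - a‖ ^ 2) ^ 2 by ring, show ‖x + a‖ ^ 4 = (‖x + a‖ ^ 2) ^ 2 by ring, h1, h2]
  nlinarith

lemma XX_two (c : ℕ → ℂ) (J : ℕ) : ∑ S ∈ (Finset.range J).powerset, ‖XX c S J‖ ^ 2 =
    2 ^ J * ∑ n ∈ Finset.range J, ‖c n‖ ^ 2 := by
  induction J with
  | zero => simp [XX]
  | succ J ih =>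
    rw [XX_step c J (fun x => ‖x‖ ^ 2)]
    simp only [sq_id]
    rw [Finset.sum_add_distrib, ← Finset.mul_sum, ih, Finset.sum_const, Finset.card_powerset,
      Finset.card_range, Finset.sum_range_succ]
    simp; ring

lemma XX_four (c : ℕ → ℂ) (J : ℕ) : ∑ S ∈ (Finset.range J).powerset, ‖XX c S J‖ ^ 4 ≤
    3 * 2 ^ J * (∑ n ∈ Finset.range J, ‖c n‖ ^ 2) ^ 2 := by
  induction J with
  | zero => simp [XX]
  | succ J ih =>
    rw [XX_step c J (fun x => ‖x‖ ^ 4)]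
    refine (Finset.sum_le_sum (fun S _ => four_id (XX c S J) (c J))).trans ?_
    rw [Finset.sum_add_distrib, Finset.sum_add_distrib, ← Finset.mul_sum, ← Finset.sum_mul,
      ← Finset.mul_sum, XX_two, Finset.sum_const, Finset.card_powerset,
      Finset.card_range, Finset.sum_range_succ, nsmul_eq_mul]
    push_cast
    have : (0 : ℝ) ≤ 2 ^ J * ‖c J‖ ^ 4 := by positivity
    rw [pow_succ (2 : ℝ)]
    nlinarith

lemma rpow_lower {s q : ℝ} (hs : 0 ≤ s) (hq : 0 < q) (hq2 : q ≤ 2) : s ^ 2 - s ^ 4 ≤ s ^ q := by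
  rcases le_total s 1 with h | h
  · rcases hs.eq_or_lt with h0 | h0
    · rw [← h0, Real.zero_rpow hq.ne']; norm_num
    have h1 := Real.rpow_le_rpow_of_exponent_ge h0 h hq2
    rw [Real.rpow_two] at h1
    have : 0 ≤ s ^ 4 := by positivity
    linarith
  · have h1 : s ^ 2 ≤ s ^ 4 := pow_le_pow_right₀ h (by norm_num)
    have := Real.rpow_nonneg hs q
    linarith

lemma khin (c : ℕ → ℂ) (J : ℕ) {q : ℝ} (hq : 0 < q) (hq2 : q ≤ 2)
    (hA : 0 < ∑ n ∈ Finset.range J, ‖c n‖ ^ 2) :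
    2 ^ J * (Real.sqrt (6 * ∑ n ∈ Finset.range J, ‖c n‖ ^ 2) ^ q / 12) ≤
    ∑ S ∈ (Finset.range J).powerset, ‖XX c S J‖ ^ q := by
  have h2 := XX_two c J
  have h4 := XX_four c J
  set A := ∑ n ∈ Finset.range J, ‖c n‖ ^ 2
  set R := Real.sqrt (6 * A) with hR
  have hR0 : 0 < R := Real.sqrt_pos.2 (by positivity)
  have hR2 : R ^ 2 = 6 * A := Real.sq_sqrt (by positivity)
  have hR4 : R ^ 4 = 36 * A ^ 2 := by rw [show R ^ 4 = (R ^ 2) ^ 2 by ring, hR2]; ring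
  have hpt : ∀ S, R ^ q * (‖XX c S J‖ ^ 2 / R ^ 2 - ‖XX c S J‖ ^ 4 / R ^ 4) ≤ ‖XX c S J‖ ^ q := by
    intro S
    have h := rpow_lower (s := ‖XX c S J‖ / R) (by positivity) hq hq2
    rw [div_pow, div_pow, Real.div_rpow (norm_nonneg _) hR0.le, le_div_iff₀ (by positivity)] at h
    linarith
  refine le_trans ?_ (Finset.sum_le_sum (fun S _ => hpt S))
  rw [← Finset.mul_sum, Finset.sum_sub_distrib, ← Finset.sum_div, ← Finset.sum_div, h2]
  have : (∑ S ∈ (Finset.range J).powerset, ‖XX c S J‖ ^ 4) / R ^ 4 ≤ 2 ^ J / 12 := by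
    rw [div_le_iff₀ (by positivity), hR4]; linarith
  have e : 2 ^ J * A / R ^ 2 = 2 ^ J / 6 := by rw [hR2]; field_simp
  rw [e]
  have hRq : 0 < R ^ q := by positivity
  nlinarith [mul_le_mul_of_nonneg_left this hRq.le]

lemma ffn_cc (a : ℕ →ᵇ ℝ) {r : ℝ} (hr : r ∈ Set.Ioo (0 : ℝ) 1) : CC (fun z => ‖ff a z‖) r :=
  cont_on_circle (f := fun z => ‖ff a z‖) (ff_diff a).continuousOn.norm hr

lemma ffn_add {q : ℝ} (hq : 0 < q) (hq1 : q ≤ 1) (a b : ℕ →ᵇ ℝ) {r : ℝ}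
    (hr : r ∈ Set.Ioo (0 : ℝ) 1) :
    circMeanR q (fun z => ‖ff a z‖) r ≤ circMeanR q (fun z => ‖ff b z‖) r +
      circMeanR q (fun z => ‖ff (a - b) z‖) r := by
  apply cm_le_add hq.le hq1 (ffn_cc b hr) (ffn_cc _ hr) (ffn_cc a hr)
  intro θ
  simp only [abs_norm]
  rw [ff_sub a b (by rw [norm_cpt hr.1.le]; exact hr.2)]
  exact norm_le_norm_add_norm_sub' _ _

lemma ffn_sub {q : ℝ} (hq : 0 < q) (hq1 : q ≤ 1) (a b : ℕ →ᵇ ℝ) {r : ℝ}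
    (hr : r ∈ Set.Ioo (0 : ℝ) 1) :
    circMeanR q (fun z => ‖ff (a - b) z‖) r ≤ circMeanR q (fun z => ‖ff a z‖) r +
      circMeanR q (fun z => ‖ff b z‖) r := by
  apply cm_le_add hq.le hq1 (ffn_cc a hr) (ffn_cc b hr) (ffn_cc _ hr)
  intro θ
  simp only [abs_norm]
  rw [ff_sub a b (by rw [norm_cpt hr.1.le]; exact hr.2)]
  exact norm_sub_le _ _

/-- the sets of the Baire argument -/
def FF (q K : ℝ) : Set (ℕ →ᵇ ℝ) :=
  {a | ∀ r ∈ Set.Ioo (0 : ℝ) 1, circMeanR q (fun z => ‖ff a z‖) r ≤ K}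

lemma FF_closed {q : ℝ} (hq : 0 < q) (hq1 : q ≤ 1) (K : ℝ) : IsClosed (FF q K) := by
  apply isClosed_of_closure_subset
  intro a ha r hr
  rw [Metric.mem_closure_iff] at ha
  apply le_of_forall_pos_le_add
  intro δ hδ
  have hr1 : 0 < 1 - r := by linarith [hr.2]
  set k := (1 - r)⁻¹ / (1 - r) with hk
  have hk0 : 0 < k := by positivity
  obtain ⟨b, hb, hab⟩ := ha (δ ^ (1 / q) / k) (by positivity)
  have h1 := ffn_add hq hq1 a b hr
  have h2 := hb r hr
  have h3 : circMeanR q (fun z => ‖ff (a - b) z‖) r ≤ (δ ^ (1 / q)) ^ q := by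
    apply cm_le_const hq.le (ffn_cc _ hr)
    intro θ
    rw [abs_norm]
    refine (norm_ff_le (a - b) (norm_cpt hr.1.le θ).le hr.2).trans ?_
    rw [dist_eq_norm, lt_div_iff₀ hk0] at hab
    exact hab.le
  rw [← Real.rpow_mul hδ.le, one_div_mul_cancel hq.ne', Real.rpow_one] at h3
  linarith

lemma FF_cover (h : ∀ a, ffV a ∉ LL) (a : ℕ →ᵇ ℝ) :
    ∃ m k : ℕ, a ∈ FF (1 / ((m : ℝ) + 2)) k := by
  have ha := h a
  simp only [LL, Set.mem_setOf_eq, not_forall, not_exists, not_and, not_lt] at ha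
  obtain ⟨q, hq, C, hC⟩ := ha
  obtain ⟨m, hm⟩ := exists_nat_one_div_lt hq
  set s : ℝ := 1 / ((m : ℝ) + 2) with hs
  have hs0 : 0 < s := by positivity
  have hs1 : s < 1 := by
    rw [hs, div_lt_one (by positivity)]
    have : (0 : ℝ) ≤ m := by positivity
    linarith
  have hsq : s ≤ q := by
    refine le_trans ?_ hm.le
    rw [hs]; gcongr; norm_num
  obtain ⟨D, hD⟩ := re_bound a ⟨hs0, hs1⟩
  obtain ⟨k, hk⟩ := exists_nat_ge (D + (1 + C))
  refine ⟨m, k, ?_⟩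
  intro r hr
  have hrc : CC (fun z => (ff a z).re) r :=
    cont_on_circle (Complex.continuous_re.comp_continuousOn (ff_diff a).continuousOn) hr
  have hic : CC (fun z => (ff a z).im) r :=
    cont_on_circle (Complex.continuous_im.comp_continuousOn (ff_diff a).continuousOn) hr
  have h1 := cm_le_add hs0.le hs1.le hrc hic (ffn_cc a hr) (by
    intro θ
    simp only [abs_norm]
    exact Complex.norm_le_abs_re_add_abs_im _)
  have h2 := cm_exp hs0 hsq hic
  have h3 : circMeanR q (fun z => (ff a z).im) r ≤ C := hC r hr
  have h4 := hD r hr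
  linarith

/-- finitely supported sign sequences -/
def bS (t : ℝ) (J : ℕ) (S : Finset ℕ) : ℕ →ᵇ ℝ :=
  BoundedContinuousFunction.ofNormedAddCommGroupDiscrete
    (fun n => if n < J then t * sg S n else 0) |t| (by
      intro n
      unfold sg
      split_ifs <;> simp)

lemma bS_apply (t : ℝ) (J : ℕ) (S : Finset ℕ) (n : ℕ) :
    bS t J S n = if n < J then t * sg S n else 0 := rfl

lemma norm_bS (t : ℝ) (J : ℕ) (S : Finset ℕ) : ‖bS t J S‖ ≤ |t| := by
  rw [BoundedContinuousFunction.norm_le (abs_nonneg _)]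
  intro n
  rw [bS_apply]
  unfold sg
  split_ifs <;> simp

lemma ff_bS (t : ℝ) (J : ℕ) (S : Finset ℕ) (z : ℂ) :
    ff (bS t J S) z = XX (fun n => (t : ℂ) * vv (z ^ (2 ^ n))) S J := by
  unfold ff XX
  rw [tsum_eq_sum (s := Finset.range J)]
  · apply Finset.sum_congr rfl
    intro n hn
    rw [bS_apply, if_pos (Finset.mem_range.1 hn)]
    push_cast; ring
  · intro n hn
    rw [bS_apply, if_neg (by simpa using hn)]
    simp

lemma avg_lower {q t : ℝ} (hq : 0 < q) (hq1 : q ≤ 1) (ht : 0 < t) (J : ℕ) (hJ : 0 < J) :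
    ∃ r ∈ Set.Ioo (0 : ℝ) 1, 2 ^ J * (Real.sqrt (6 * (J * (t / 4) ^ 2)) ^ q / 12) ≤
      ∑ S ∈ (Finset.range J).powerset, circMeanR q (fun z => ‖ff (bS t J S) z‖) r := by
  set r : ℝ := (1 / 2 : ℝ) ^ (((2 ^ J : ℕ) : ℝ)⁻¹) with hr'
  have hr : r ∈ Set.Ioo (0 : ℝ) 1 :=
    ⟨by positivity, Real.rpow_lt_one (by norm_num) (by norm_num) (by positivity)⟩
  have hrJ : r ^ (2 ^ J) = 1 / 2 := Real.rpow_inv_natCast_pow (by norm_num) (by positivity)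
  refine ⟨r, hr, ?_⟩
  have hpt : ∀ θ, 2 ^ J * (Real.sqrt (6 * (J * (t / 4) ^ 2)) ^ q / 12) ≤
      ∑ S ∈ (Finset.range J).powerset, |‖ff (bS t J S) (cpt r θ)‖| ^ q := by
    intro θ
    simp only [ff_bS, abs_norm]
    set c : ℕ → ℂ := fun n => (t : ℂ) * vv (cpt r θ ^ (2 ^ n)) with hc
    have hA : J * (t / 4) ^ 2 ≤ ∑ n ∈ Finset.range J, ‖c n‖ ^ 2 := by
      have : ∑ n ∈ Finset.range J, (t / 4) ^ 2 ≤ ∑ n ∈ Finset.range J, ‖c n‖ ^ 2 := by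
        apply Finset.sum_le_sum
        intro n hn
        have hn' := Finset.mem_range.1 hn
        have hz : ‖cpt r θ ^ (2 ^ n)‖ = r ^ (2 ^ n) := by rw [norm_pow, norm_cpt hr.1.le]
        have h1 := le_norm_vv (z := cpt r θ ^ (2 ^ n))
          (pow_norm_lt (by rw [norm_cpt hr.1.le]; exact hr.2) n)
        rw [hz] at h1
        have h2 : 1 / 2 ≤ r ^ (2 ^ n) := by
          rw [← hrJ]
          exact pow_le_pow_of_le_one hr.1.le hr.2.le (Nat.pow_le_pow_right (by norm_num) hn'.le)
        have h3 : t / 4 ≤ ‖c n‖ := by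
          rw [hc, norm_mul, Complex.norm_real, Real.norm_eq_abs, abs_of_pos ht]
          nlinarith
        gcongr
      simpa using this
    have hA0 : (0 : ℝ) < J * (t / 4) ^ 2 := by positivity
    refine le_trans ?_ (khin c J hq (by linarith) (hA0.trans_le hA))
    gcongr
  simp only [cm_def]
  rw [← Finset.mul_sum, ← intervalIntegral.integral_finset_sum (fun S _ => (ffn_cc _ hr).ii hq.le _ _)]
  have hpi := Real.pi_pos
  have h1 : ∫ θ in (-Real.pi)..Real.pi, 2 ^ J * (Real.sqrt (6 * (J * (t / 4) ^ 2)) ^ q / 12) ≤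
      ∫ θ in (-Real.pi)..Real.pi,
        ∑ S ∈ (Finset.range J).powerset, |‖ff (bS t J S) (cpt r θ)‖| ^ q := by
    apply intervalIntegral.integral_mono_on (by linarith) (by simp)
    · apply Continuous.intervalIntegrable
      exact continuous_finset_sum _ (fun S _ => (ffn_cc _ hr).cont_rpow hq.le)
    · intro θ _; exact hpt θ
  rw [intervalIntegral.integral_const, smul_eq_mul] at h1
  refine le_trans (le_of_eq ?_) (mul_le_mul_of_nonneg_left h1 (by positivity))
  field_simp; ring

lemma exists_LL : ∃ h : HarmV, h ∈ LL := by
  by_contra hcon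
  push Not at hcon
  have hU : (⋃ mk : ℕ × ℕ, FF (1 / ((mk.1 : ℝ) + 2)) mk.2) = Set.univ := by
    apply Set.eq_univ_of_forall
    intro a
    obtain ⟨m, k, h⟩ := FF_cover (fun a => hcon _) a
    exact Set.mem_iUnion.2 ⟨(m, k), h⟩
  have hs0 : ∀ m : ℕ, (0 : ℝ) < 1 / ((m : ℝ) + 2) := fun m => by positivity
  have hs1 : ∀ m : ℕ, 1 / ((m : ℝ) + 2) ≤ (1 : ℝ) := fun m => by
    rw [div_le_one (by positivity)]
    have : (0 : ℝ) ≤ m := by positivity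
    linarith
  obtain ⟨⟨m, k⟩, a0, ha0⟩ := nonempty_interior_of_iUnion_of_closed
    (fun mk : ℕ × ℕ => FF_closed (hs0 mk.1) (hs1 mk.1) mk.2) hU
  obtain ⟨ε, hε, hball⟩ := Metric.mem_nhds_iff.1 (mem_interior_iff_mem_nhds.1 ha0)
  simp only at hball
  have hq := hs0 m
  have hq1 := hs1 m
  set q : ℝ := 1 / ((m : ℝ) + 2)
  have hb : ∀ b : ℕ →ᵇ ℝ, ‖b‖ < ε → ∀ r ∈ Set.Ioo (0 : ℝ) 1,
      circMeanR q (fun z => ‖ff b z‖) r ≤ 2 * k := by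
    intro b hb r hr
    have h1 := hball (Metric.mem_ball_self hε) r hr
    have h2 := hball (a := a0 + b) (by simpa [mem_ball_iff_norm] using hb) r hr
    have h3 := ffn_sub hq hq1 (a0 + b) a0 hr
    rw [add_sub_cancel_left] at h3
    linarith
  have hbd : ∀ J : ℕ, 0 < J →
      Real.sqrt (6 * (J * (ε / 2 / 4) ^ 2)) ^ q / 12 ≤ 2 * k := by
    intro J hJ
    obtain ⟨r, hr, h⟩ := avg_lower hq hq1 (half_pos hε) J hJ
    have h2 : ∑ S ∈ (Finset.range J).powerset, circMeanR q (fun z => ‖ff (bS (ε / 2) J S) z‖) r ≤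
        2 ^ J * (2 * k) := by
      refine (Finset.sum_le_card_nsmul _ _ (2 * (k : ℝ)) ?_).trans (le_of_eq ?_)
      · intro S _
        apply hb _ _ r hr
        refine (norm_bS _ _ _).trans_lt ?_
        rw [abs_of_pos (half_pos hε)]; linarith
      · simp
    exact le_of_mul_le_mul_left (h.trans h2) (by positivity)
  have ht : Filter.Tendsto (fun J : ℕ => Real.sqrt (6 * (J * (ε / 2 / 4) ^ 2)) ^ q / 12)
      Filter.atTop Filter.atTop := by
    apply Filter.Tendsto.atTop_div_const (by norm_num)
    apply (tendsto_rpow_atTop hq).comp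
    apply Real.tendsto_sqrt_atTop.comp
    apply Filter.Tendsto.const_mul_atTop (by norm_num)
    exact tendsto_natCast_atTop_atTop.atTop_mul_const (by positivity)
  obtain ⟨J, hJ1, hJ0⟩ := ((ht.eventually_gt_atTop (2 * (k : ℝ))).and
    (Filter.eventually_gt_atTop 0)).exists
  exact absurd (hbd J hJ0) (not_le.2 hJ1)

/-- Theorem 3.7: the set `ℒ` of `u ∈ ⋂_{p<1} h^p` whose normalized harmonic conjugate
`ũ = Im f` belongs to no `h^q` with `q > 0` is a `G_δ` dense subset of `⋂_{p<1} h^p`. -/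
theorem conjugate_in_no_hq_generic :
    @IsGδ HarmV (ballTopology harmDist)
      {f : HarmV | ∀ q : ℝ, 0 < q → ∀ C : ℝ, ∃ r ∈ Set.Ioo (0 : ℝ) 1,
        C < circMeanR q (fun z => (f.1 z).im) r} ∧
    @Dense HarmV (ballTopology harmDist)
      {f : HarmV | ∀ q : ℝ, 0 < q → ∀ C : ℝ, ∃ r ∈ Set.Ioo (0 : ℝ) 1,
        C < circMeanR q (fun z => (f.1 z).im) r} := by
  exact ⟨LL_gdelta, exists_LL.elim LL_dense⟩

end
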